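/- arXiv:math/0012029 — 2 statements merged into one kernel-verified Lean document; each statement's English description precedes it below -/
import Mathlib

section
/- For each ordered pair (α,β) in {(132,231), (132,312), (213,231), (213,312), (231,132), (231,213), (312,132), (312,213)} of patterns of length three, and for every n ≥ 3, the number of permutations of {1,…,n} that avoid α and contain β exactly once is s_n(α;β) = 2^{n−3}. -/
/-- Number of occurrences of the pattern `α ∈ S_k` in the permutation `π ∈ S_n`:
the number of strictly increasing choices of `k` indices such that the corresponding
subword of `π` is order-isomorphic to `α`. -/
noncomputable def occCount {k n : ℕ} (α : Equiv.Perm (Fin k)) (π : Equiv.Perm (Fin n)) : ℕ :=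
  Nat.card {f : Fin k → Fin n // StrictMono f ∧ ∀ a b : Fin k, α a < α b ↔ π (f a) < π (f b)}

/-- `π` avoids the pattern `α`. -/
def avoids {k n : ℕ} (α : Equiv.Perm (Fin k)) (π : Equiv.Perm (Fin n)) : Prop :=
  occCount α π = 0

/-- `π` contains the pattern `α` exactly once. -/
def containsOnce {k n : ℕ} (α : Equiv.Perm (Fin k)) (π : Equiv.Perm (Fin n)) : Prop :=
  occCount α π = 1

/-- The pattern `123` (as a permutation of `Fin 3`, 0-indexed). -/
def p123 : Equiv.Perm (Fin 3) := ⟨![0,1,2], ![0,1,2], by decide, by decide⟩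
/-- The pattern `132`. -/
def p132 : Equiv.Perm (Fin 3) := ⟨![0,2,1], ![0,2,1], by decide, by decide⟩
/-- The pattern `213`. -/
def p213 : Equiv.Perm (Fin 3) := ⟨![1,0,2], ![1,0,2], by decide, by decide⟩
/-- The pattern `231`. -/
def p231 : Equiv.Perm (Fin 3) := ⟨![1,2,0], ![2,0,1], by decide, by decide⟩
/-- The pattern `312`. -/
def p312 : Equiv.Perm (Fin 3) := ⟨![2,0,1], ![1,2,0], by decide, by decide⟩
/-- The pattern `321`. -/
def p321 : Equiv.Perm (Fin 3) := ⟨![2,1,0], ![2,1,0], by decide, by decide⟩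

/-- `s_n(α;β)`: the number of permutations of `{1,…,n}` that avoid `α` and contain `β`
exactly once. -/
noncomputable def sAvoidContain (α β : Equiv.Perm (Fin 3)) (n : ℕ) : ℕ :=
  Nat.card {π : Equiv.Perm (Fin n) // avoids α π ∧ containsOnce β π}

/-- `s_n(∅;{α,β})`: the number of permutations of `{1,…,n}` that contain each of `α` and `β`
exactly once. -/
noncomputable def sContainBoth (α β : Equiv.Perm (Fin 3)) (n : ℕ) : ℕ :=
  Nat.card {π : Equiv.Perm (Fin n) // containsOnce α π ∧ containsOnce β π}

/-!
Reversal, complementation and inversion preserve occurrence counts, and the eight pairs form a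
single orbit under these symmetries, so it suffices to count `S_n(132; 231)`. If the maximum of such
a permutation sits at an interior position `p`, then any entry to its left together with any entry
to its right forms a `132` or a `231` with it; the former are forbidden and the latter number
`p * (n - 1 - p)` (with positions counted from `0`), which exceeds `1` for `n ≥ 4`. So the maximum
is the first or the last entry, where it belongs to no occurrence of `132` or `231`: removing it
gives `s_{n+1} = 2 s_n` for `n ≥ 3`, starting from `S_3(132; 231) = {231}`.
-/

open Equiv

section Occurrence

variable {k n : ℕ} {α : Perm (Fin k)} {π : Perm (Fin n)} {f : Fin k → Fin n}

/-- The index map `f` is an occurrence of the pattern `α` in `π`; `occCount α π` counts these. -/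
def IsOccurrence (α : Perm (Fin k)) (π : Perm (Fin n)) (f : Fin k → Fin n) : Prop :=
  StrictMono f ∧ ∀ a b : Fin k, α a < α b ↔ π (f a) < π (f b)

theorem occCount_eq_ncard (α : Perm (Fin k)) (π : Perm (Fin n)) :
    occCount α π = {f | IsOccurrence α π f}.ncard :=
  rfl

theorem avoids_iff_forall_not_isOccurrence : avoids α π ↔ ∀ f, ¬ IsOccurrence α π f := by
  rw [avoids, occCount_eq_ncard, Set.ncard_eq_zero, Set.eq_empty_iff_forall_notMem]
  rfl

theorem containsOnce.eq_of_isOccurrence {g : Fin k → Fin n} (h : containsOnce α π)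
    (hf : IsOccurrence α π f) (hg : IsOccurrence α π g) : f = g := by
  rw [containsOnce, occCount_eq_ncard] at h
  exact (Set.ncard_le_one (Set.toFinite _)).mp h.le f hf g hg

/-- The two conditions say the same about positions and about values, so inversion swaps them. -/
theorem isOccurrence_iff_strictMono :
    IsOccurrence α π f ↔ StrictMono f ∧ StrictMono (π ∘ f ∘ α.symm) := by
  refine and_congr_right fun _ => ⟨fun h a b hab => ?_, fun h a b => ?_⟩
  · simpa only [Function.comp_apply, ← h, apply_symm_apply] using hab
  · simpa only [Function.comp_apply, symm_apply_apply] using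
      (h.lt_iff_lt (a := α a) (b := α b)).symm

theorem isOccurrence_mul_revPerm :
    IsOccurrence (α * Fin.revPerm) (π * Fin.revPerm) (Fin.rev ∘ f ∘ Fin.rev) ↔
      IsOccurrence α π f := by
  have hf : StrictMono (Fin.rev ∘ f ∘ Fin.rev) ↔ StrictMono f :=
    ⟨fun h a b hab => by simpa using h (Fin.rev_lt_rev.mpr hab),
      fun h a b hab => by simpa using h (Fin.rev_lt_rev.mpr hab)⟩
  exact and_congr hf ⟨fun h a b => by simpa using h a.rev b.rev,
    fun h a b => by simpa using h a.rev b.rev⟩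

theorem isOccurrence_revPerm_mul :
    IsOccurrence (Fin.revPerm * α) (Fin.revPerm * π) f ↔ IsOccurrence α π f := by
  refine and_congr_right fun _ => ?_
  simpa using forall_comm

theorem isOccurrence_inv : IsOccurrence α⁻¹ π⁻¹ (π ∘ f ∘ α.symm) ↔ IsOccurrence α π f := by
  have hf : ⇑π⁻¹ ∘ (π ∘ f ∘ α.symm) ∘ (α⁻¹).symm = f := by
    funext a
    simp [Perm.inv_def]
  rw [isOccurrence_iff_strictMono, isOccurrence_iff_strictMono, hf, and_comm]

theorem isOccurrence_self_iff {α π : Perm (Fin k)} {f : Fin k → Fin k} :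
    IsOccurrence α π f ↔ f = id ∧ π = α := by
  rw [isOccurrence_iff_strictMono]
  constructor
  · rintro ⟨hf, hπ⟩
    obtain rfl := hf.eq_id
    exact ⟨rfl, Equiv.ext fun a => by simpa using congrFun hπ.eq_id (α a)⟩
  · rintro ⟨rfl, rfl⟩
    simpa using strictMono_id

theorem avoids_iff_ne {α π : Perm (Fin k)} : avoids α π ↔ π ≠ α := by
  simp [avoids_iff_forall_not_isOccurrence, isOccurrence_self_iff]

theorem containsOnce_iff_eq {α π : Perm (Fin k)} : containsOnce α π ↔ π = α := by
  rw [containsOnce, occCount_eq_ncard]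
  by_cases h : π = α <;> simp [isOccurrence_self_iff, h]

end Occurrence

section Symmetry

variable {k n : ℕ}

theorem occCount_mul_revPerm (α : Perm (Fin k)) (π : Perm (Fin n)) :
    occCount (α * Fin.revPerm) (π * Fin.revPerm) = occCount α π :=
  (Nat.card_congr <| (Fin.revPerm.arrowCongr Fin.revPerm).subtypeEquiv fun _ =>
    isOccurrence_mul_revPerm.symm).symm

theorem occCount_revPerm_mul (α : Perm (Fin k)) (π : Perm (Fin n)) :
    occCount (Fin.revPerm * α) (Fin.revPerm * π) = occCount α π :=
  Nat.card_congr <| Equiv.subtypeEquivRight fun _ => isOccurrence_revPerm_mul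

theorem occCount_inv (α : Perm (Fin k)) (π : Perm (Fin n)) : occCount α⁻¹ π⁻¹ = occCount α π :=
  (Nat.card_congr <| (α.arrowCongr π).subtypeEquiv fun _ => isOccurrence_inv.symm).symm

theorem sAvoidContain_congr {α β α' β' : Perm (Fin 3)} (e : Perm (Perm (Fin n)))
    (hα : ∀ π, occCount α' (e π) = occCount α π) (hβ : ∀ π, occCount β' (e π) = occCount β π) :
    sAvoidContain α' β' n = sAvoidContain α β n :=
  (Nat.card_congr <| e.subtypeEquiv fun π => by simp only [avoids, containsOnce, hα, hβ]).symm

theorem sAvoidContain_mul_revPerm (α β : Perm (Fin 3)) (n : ℕ) :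
    sAvoidContain (α * Fin.revPerm) (β * Fin.revPerm) n = sAvoidContain α β n :=
  sAvoidContain_congr (Equiv.mulRight Fin.revPerm) (occCount_mul_revPerm α)
    (occCount_mul_revPerm β)

theorem sAvoidContain_revPerm_mul (α β : Perm (Fin 3)) (n : ℕ) :
    sAvoidContain (Fin.revPerm * α) (Fin.revPerm * β) n = sAvoidContain α β n :=
  sAvoidContain_congr (Equiv.mulLeft Fin.revPerm) (occCount_revPerm_mul α)
    (occCount_revPerm_mul β)

theorem sAvoidContain_inv (α β : Perm (Fin 3)) (n : ℕ) :
    sAvoidContain α⁻¹ β⁻¹ n = sAvoidContain α β n :=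
  sAvoidContain_congr (Equiv.inv _) (occCount_inv α) (occCount_inv β)

theorem p132_mul_revPerm : p132 * Fin.revPerm = p231 := by decide

theorem p231_mul_revPerm : p231 * Fin.revPerm = p132 := by decide

theorem revPerm_mul_p132 : Fin.revPerm * p132 = p312 := by decide

theorem revPerm_mul_p231 : Fin.revPerm * p231 = p213 := by decide

theorem p132_inv : p132⁻¹ = p132 := by decide

theorem p213_inv : p213⁻¹ = p213 := by decide

theorem p231_inv : p231⁻¹ = p312 := by decide

theorem p312_inv : p312⁻¹ = p231 := by decide

end Symmetry

section InsertAt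

variable {k n : ℕ} {p v : Fin (n + 1)} {σ : Perm (Fin n)}

/-- The permutation obtained from the word `σ` by inserting the value `v` at position `p`, the
entries of `σ` that are at least `v` being raised by one to make room for it. -/
def insertAt (p v : Fin (n + 1)) (σ : Perm (Fin n)) : Perm (Fin (n + 1)) :=
  (finSuccEquiv' p).trans ((optionCongr σ).trans (finSuccEquiv' v).symm)

@[simp]
theorem insertAt_apply_self (p v : Fin (n + 1)) (σ : Perm (Fin n)) : insertAt p v σ p = v := by
  simp [insertAt]

@[simp]
theorem insertAt_apply_succAbove (p v : Fin (n + 1)) (σ : Perm (Fin n)) (j : Fin n) :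
    insertAt p v σ (p.succAbove j) = v.succAbove (σ j) := by
  simp [insertAt]

theorem insertAt_injective (p v : Fin (n + 1)) : Function.Injective (insertAt p v) := by
  intro σ τ h
  ext1 j
  simpa using DFunLike.congr_fun h (p.succAbove j)

theorem disjoint_image_insertAt {p q : Fin (n + 1)} (hpq : p ≠ q) (v : Fin (n + 1))
    (s t : Set (Perm (Fin n))) : Disjoint (insertAt p v '' s) (insertAt q v '' t) := by
  rw [Set.disjoint_left]
  rintro _ ⟨σ, -, rfl⟩ ⟨τ, -, h⟩
  apply hpq
  apply (insertAt p v σ).injective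
  rw [insertAt_apply_self, ← h, insertAt_apply_self]

theorem exists_insertAt_eq (π : Perm (Fin (n + 1))) (p : Fin (n + 1)) :
    ∃ σ, insertAt p (π p) σ = π := by
  let restrict : {x // x ≠ p} ≃ {y // y ≠ π p} := π.subtypeEquiv fun _ => π.injective.ne_iff.symm
  refine ⟨(finSuccAboveEquiv p).trans (restrict.trans (finSuccAboveEquiv (π p)).symm), ?_⟩
  ext1 x
  cases x using p.succAboveCases with
  | x => simp
  | p j =>
    rw [insertAt_apply_succAbove]
    exact congrArg Subtype.val
      ((finSuccAboveEquiv (π p)).apply_symm_apply (restrict (finSuccAboveEquiv p j)))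

theorem isOccurrence_insertAt_succAbove_comp {α : Perm (Fin k)} {f : Fin k → Fin n} :
    IsOccurrence α (insertAt p v σ) (p.succAbove ∘ f) ↔ IsOccurrence α σ f :=
  and_congr (by simp [StrictMono]) (by simp)

theorem occCount_insertAt_of_forall_ne {α : Perm (Fin k)}
    (h : ∀ f, IsOccurrence α (insertAt p v σ) f → ∀ i, f i ≠ p) :
    occCount α (insertAt p v σ) = occCount α σ := by
  have himage : {f | IsOccurrence α (insertAt p v σ) f} =
      (p.succAbove ∘ ·) '' {f | IsOccurrence α σ f} := by
    refine Set.Subset.antisymm (fun f hf => ?_) ?_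
    · choose g hg using fun i => Fin.exists_succAbove_eq (h f hf i)
      obtain rfl : p.succAbove ∘ g = f := funext hg
      exact ⟨g, isOccurrence_insertAt_succAbove_comp.mp hf, rfl⟩
    · rintro _ ⟨g, hg, rfl⟩
      exact isOccurrence_insertAt_succAbove_comp.mpr hg
  rw [occCount_eq_ncard, himage,
    Set.ncard_image_of_injective _ Fin.succAbove_right_injective.comp_left, occCount_eq_ncard]

theorem IsOccurrence.apply_eq_last {α : Perm (Fin (k + 1))} {π : Perm (Fin (n + 1))}
    {f : Fin (k + 1) → Fin (n + 1)} (hf : IsOccurrence α π f) {i : Fin (k + 1)}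
    (hi : π (f i) = Fin.last n) : α i = Fin.last k := by
  by_contra hne
  have hlt : α i < α (α.symm (Fin.last k)) := by
    simpa using Fin.lt_last_iff_ne_last.mpr hne
  exact (Fin.le_last _).not_gt (hi ▸ (hf.2 _ _).mp hlt)

theorem occCount_insertAt_last {α : Perm (Fin (k + 1))} (hα₀ : α 0 ≠ Fin.last k)
    (hα₁ : α (Fin.last k) ≠ Fin.last k) (hp : p = 0 ∨ p = Fin.last n) :
    occCount α (insertAt p (Fin.last n) σ) = occCount α σ := by
  refine occCount_insertAt_of_forall_ne fun f hf i hi => ?_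
  have hαi : α i = Fin.last k := hf.apply_eq_last (by rw [hi, insertAt_apply_self])
  rcases hp with rfl | rfl
  · have hi₀ : i ≠ 0 := fun h => hα₀ (h ▸ hαi)
    exact (Fin.zero_le _).not_gt (hi ▸ hf.1 (Fin.pos_iff_ne_zero.mpr hi₀))
  · have hi₁ : i ≠ Fin.last k := fun h => hα₁ (h ▸ hαi)
    exact (Fin.le_last _).not_gt (hi ▸ hf.1 (Fin.lt_last_iff_ne_last.mpr hi₁))

end InsertAt

section Counting

variable {n : ℕ}

/-- The set `S_n(α;β)` counted by `sAvoidContain α β n`. -/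
def avoidContainSet (α β : Perm (Fin 3)) (n : ℕ) : Set (Perm (Fin n)) :=
  {π | avoids α π ∧ containsOnce β π}

theorem sAvoidContain_eq_ncard (α β : Perm (Fin 3)) (n : ℕ) :
    sAvoidContain α β n = (avoidContainSet α β n).ncard :=
  rfl

theorem isOccurrence_p132_iff {π : Perm (Fin n)} {a b c : Fin n} :
    IsOccurrence p132 π ![a, b, c] ↔ a < b ∧ b < c ∧ π a < π c ∧ π c < π b := by
  have hcomp : π ∘ ![a, b, c] ∘ p132.symm = ![π a, π c, π b] := by
    funext i
    fin_cases i <;> rfl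
  simp [isOccurrence_iff_strictMono, hcomp, and_assoc]

theorem isOccurrence_p231_iff {π : Perm (Fin n)} {a b c : Fin n} :
    IsOccurrence p231 π ![a, b, c] ↔ a < b ∧ b < c ∧ π c < π a ∧ π a < π b := by
  have hcomp : π ∘ ![a, b, c] ∘ p231.symm = ![π c, π a, π b] := by
    funext i
    fin_cases i <;> rfl
  simp [isOccurrence_iff_strictMono, hcomp, and_assoc]

theorem isOccurrence_p231_of_avoids_p132 {π : Perm (Fin (n + 1))} (h : avoids p132 π)
    {a p c : Fin (n + 1)} (hp : π p = Fin.last n) (hap : a < p) (hpc : p < c) :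
    IsOccurrence p231 π ![a, p, c] := by
  have lt_max {x : Fin (n + 1)} (hx : x ≠ p) : π x < π p :=
    hp ▸ Fin.lt_last_iff_ne_last.mpr (hp ▸ π.injective.ne hx)
  have hca : π c < π a := by
    refine (π.injective.ne (hap.trans hpc).ne').lt_of_le (not_lt.mp fun hac => ?_)
    exact avoids_iff_forall_not_isOccurrence.mp h _
      (isOccurrence_p132_iff.mpr ⟨hap, hpc, hac, lt_max hpc.ne'⟩)
  exact isOccurrence_p231_iff.mpr ⟨hap, hpc, hca, lt_max hap.ne⟩

theorem eq_zero_or_eq_last_of_mem_avoidContainSet (hn : 3 ≤ n) {π : Perm (Fin (n + 1))}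
    (hπ : π ∈ avoidContainSet p132 p231 (n + 1)) {p : Fin (n + 1)} (hp : π p = Fin.last n) :
    p = 0 ∨ p = Fin.last n := by
  obtain ⟨havoid, honce⟩ := hπ
  by_contra! ⟨hp₀, hp₁⟩
  replace hp₀ : 0 < p := Fin.pos_iff_ne_zero.mpr hp₀
  replace hp₁ : p < Fin.last n := Fin.lt_last_iff_ne_last.mpr hp₁
  obtain ⟨q, hq⟩ : ∃ q, q ∉ ({0, p, Fin.last n} : Finset (Fin (n + 1))) := by
    by_contra! hall
    have hcard := Finset.card_le_three (a := 0) (b := p) (c := Fin.last n)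
    rw [Finset.eq_univ_of_forall hall, Finset.card_fin] at hcard
    omega
  simp only [Finset.mem_insert, Finset.mem_singleton, not_or] at hq
  obtain ⟨hq₀, hqp, hq₁⟩ := hq
  have hocc : ∀ {a c}, a < p → p < c → IsOccurrence p231 π ![a, p, c] :=
    isOccurrence_p231_of_avoids_p132 havoid hp
  rcases lt_or_gt_of_ne hqp with hlt | hgt
  · exact hq₀ (congrFun (honce.eq_of_isOccurrence (hocc hlt hp₁) (hocc hp₀ hp₁)) 0)
  · exact hq₁ (congrFun (honce.eq_of_isOccurrence (hocc hp₀ hgt) (hocc hp₀ hp₁)) 2)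

theorem insertAt_last_mem_avoidContainSet_iff {p : Fin (n + 1)} (hp : p = 0 ∨ p = Fin.last n)
    {σ : Perm (Fin n)} :
    insertAt p (Fin.last n) σ ∈ avoidContainSet p132 p231 (n + 1) ↔
      σ ∈ avoidContainSet p132 p231 n := by
  have h132 : occCount p132 (insertAt p (Fin.last n) σ) = occCount p132 σ :=
    occCount_insertAt_last (by decide) (by decide) hp
  have h231 : occCount p231 (insertAt p (Fin.last n) σ) = occCount p231 σ :=
    occCount_insertAt_last (by decide) (by decide) hp
  simp only [avoidContainSet, Set.mem_ofPred_eq, avoids, containsOnce, h132, h231]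

theorem avoidContainSet_succ (hn : 3 ≤ n) :
    avoidContainSet p132 p231 (n + 1) =
      insertAt 0 (Fin.last n) '' avoidContainSet p132 p231 n ∪
        insertAt (Fin.last n) (Fin.last n) '' avoidContainSet p132 p231 n := by
  refine Set.Subset.antisymm (fun π hπ => ?_) (Set.union_subset ?_ ?_)
  · obtain ⟨p, hp⟩ := π.surjective (Fin.last n)
    have hends := eq_zero_or_eq_last_of_mem_avoidContainSet hn hπ hp
    obtain ⟨σ, rfl⟩ := hp ▸ exists_insertAt_eq π p
    have hσ := (insertAt_last_mem_avoidContainSet_iff hends).mp hπ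
    rcases hends with rfl | rfl
    · exact .inl ⟨σ, hσ, rfl⟩
    · exact .inr ⟨σ, hσ, rfl⟩
  · rintro _ ⟨σ, hσ, rfl⟩
    exact (insertAt_last_mem_avoidContainSet_iff (.inl rfl)).mpr hσ
  · rintro _ ⟨σ, hσ, rfl⟩
    exact (insertAt_last_mem_avoidContainSet_iff (.inr rfl)).mpr hσ

theorem sAvoidContain_p132_p231_succ (hn : 3 ≤ n) :
    sAvoidContain p132 p231 (n + 1) = 2 * sAvoidContain p132 p231 n := by
  have hends : (0 : Fin (n + 1)) ≠ Fin.last n := by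
    rw [ne_eq, Fin.ext_iff, Fin.val_zero, Fin.val_last]
    omega
  rw [sAvoidContain_eq_ncard, avoidContainSet_succ hn,
    Set.ncard_union_eq (disjoint_image_insertAt hends _ _ _),
    Set.ncard_image_of_injective _ (insertAt_injective _ _),
    Set.ncard_image_of_injective _ (insertAt_injective _ _), ← sAvoidContain_eq_ncard, two_mul]

theorem sAvoidContain_three {α β : Perm (Fin 3)} (h : α ≠ β) : sAvoidContain α β 3 = 1 := by
  have hset : avoidContainSet α β 3 = {β} := by
    ext π
    simp only [avoidContainSet, avoids_iff_ne, containsOnce_iff_eq, Set.mem_ofPred_eq,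
      Set.mem_singleton_iff, and_iff_right_iff_imp]
    rintro rfl
    exact h.symm
  rw [sAvoidContain_eq_ncard, hset, Set.ncard_singleton]

theorem sAvoidContain_p132_p231 (hn : 3 ≤ n) : sAvoidContain p132 p231 n = 2 ^ (n - 3) := by
  induction n, hn using Nat.le_induction with
  | base => exact sAvoidContain_three (by decide)
  | succ n hn ih => rw [sAvoidContain_p132_p231_succ hn, ih, Nat.succ_sub hn, pow_succ']

end Counting

/-- Theorem 4.4: for each listed pair `(α,β)`, `s_n(α;β) = 2^{n−3}` for `n ≥ 3`. -/
theorem sAvoidContain_eq_of_mem_classE :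
    ∀ p ∈ [(p132, p231), (p132, p312), (p213, p231), (p213, p312),
           (p231, p132), (p231, p213), (p312, p132), (p312, p213)],
      ∀ n : ℕ, 3 ≤ n → sAvoidContain p.1 p.2 n = 2 ^ (n - 3) := by
  intro p hp n hn
  have reverse := sAvoidContain_mul_revPerm (n := n)
  have complement := sAvoidContain_revPerm_mul (n := n)
  have inverse := sAvoidContain_inv (n := n)
  have h132_231 := sAvoidContain_p132_p231 hn
  have h231_132 : sAvoidContain p231 p132 n = 2 ^ (n - 3) := by
    rw [← h132_231, ← reverse p132 p231, p132_mul_revPerm, p231_mul_revPerm]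
  have h312_213 : sAvoidContain p312 p213 n = 2 ^ (n - 3) := by
    rw [← h132_231, ← complement p132 p231, revPerm_mul_p132, revPerm_mul_p231]
  have h213_312 : sAvoidContain p213 p312 n = 2 ^ (n - 3) := by
    rw [← h231_132, ← complement p231 p132, revPerm_mul_p132, revPerm_mul_p231]
  have h132_312 : sAvoidContain p132 p312 n = 2 ^ (n - 3) := by
    rw [← h132_231, ← inverse p132 p231, p132_inv, p231_inv]
  have h312_132 : sAvoidContain p312 p132 n = 2 ^ (n - 3) := by
    rw [← h231_132, ← inverse p231 p132, p132_inv, p231_inv]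
  have h231_213 : sAvoidContain p231 p213 n = 2 ^ (n - 3) := by
    rw [← h312_213, ← inverse p312 p213, p213_inv, p312_inv]
  have h213_231 : sAvoidContain p213 p231 n = 2 ^ (n - 3) := by
    rw [← h213_312, ← inverse p213 p312, p213_inv, p312_inv]
  simp only [List.mem_cons, List.not_mem_nil, or_false] at hp
  rcases hp with rfl | rfl | rfl | rfl | rfl | rfl | rfl | rfl <;> assumption
end

section
/- For each unordered pair {α,β} in {{123,132}, {123,213}, {231,321}, {312,321}} of patterns of length three, and for every n ≥ 5, the number of permutations of {1,…,n} that contain α exactly once and contain β exactly once is s_n(∅;{α,β}) = (n−3)(n−4)·2^{n−5}. -/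
/-!
Call `1 ⊕ α` the pattern obtained from `α` by putting a new minimum in front, so that
`123 = 1 ⊕ 12` and `132 = 1 ⊕ 21`. Inserting a new minimum at position `p` of `τ` increases the
number of occurrences of `1 ⊕ α` by the number of occurrences of `α` in the suffix of `τ` starting
at `p`. Summed over the two patterns `α` of length two this increase is `(n - p).choose 2`, so a
permutation with at most two occurrences of `123` and `132` in total arises only from insertions at
the last three positions. An insertion at one of the last two positions creates no occurrence and
decides whether the new permutation ends with an ascent or a descent; an insertion just before them
keeps the final pattern `α` and creates one occurrence of `1 ⊕ α`.

Hence such permutations are counted by a recursion that records the final pattern and the number of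
occurrences of `123` and of `132`. The other three pairs are images of `{123, 132}` under reversal
and complementation.
-/

open Equiv

theorem ncard_strictMono_mem {α : Type*} [LinearOrder α] (s : Finset α) (k : ℕ) :
    {f : Fin k → α | StrictMono f ∧ ∀ a, f a ∈ s}.ncard = s.card.choose k := by
  have range_eq : {f : Fin k → α | StrictMono f ∧ ∀ a, f a ∈ s} =
      Set.range fun (e : Fin k ↪o s) a ↦ (e a : α) := by
    ext f
    constructor
    · rintro ⟨hf, hs⟩
      exact ⟨OrderEmbedding.ofStrictMono (fun a ↦ ⟨f a, hs a⟩) fun _ _ h ↦ hf h, rfl⟩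
    · rintro ⟨e, rfl⟩
      exact ⟨fun _ _ h ↦ e.strictMono h, fun a ↦ (e a).2⟩
  have coe_injective : Function.Injective fun (e : Fin k ↪o s) a ↦ (e a : α) :=
    fun _ _ h ↦ DFunLike.ext _ _ fun a ↦ Subtype.ext (congrFun h a)
  rw [range_eq, Set.ncard_range_of_injective coe_injective,
    Nat.card_congr Set.powersetCard.ofFinEmbEquiv, Set.powersetCard.card,
    Nat.card_eq_fintype_card, Fintype.card_coe]

theorem existsUnique_perm_lt_iff_lt {α : Type*} [LinearOrder α] {k : ℕ} {f : Fin k → α}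
    (hf : Function.Injective f) : ∃! σ : Perm (Fin k), ∀ a b, σ a < σ b ↔ f a < f b := by
  have sort_strictMono : StrictMono (f ∘ Tuple.sort f) :=
    (Tuple.monotone_sort f).strictMono_of_injective (hf.comp (Tuple.sort f).injective)
  refine ⟨(Tuple.sort f)⁻¹, fun a b ↦ ?_, fun σ hσ ↦ ?_⟩
  · simp [← sort_strictMono.lt_iff_lt]
  · have symm_strictMono : StrictMono (f ∘ ⇑σ⁻¹) := fun a b h ↦ by simpa [← hσ] using h
    rw [← inv_inj, inv_inv]
    exact Equiv.ext fun a ↦ hf <| congrFun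
      (Tuple.unique_monotone symm_strictMono.monotone sort_strictMono.monotone) a

theorem sum_card_and_of_existsUnique {ι X : Type*} [Fintype ι] [Finite X] {R : ι → X → Prop}
    (hR : ∀ x, ∃! i, R i x) (P : X → Prop) :
    ∑ i, Nat.card {x // R i x ∧ P x} = Nat.card {x // P x} := by
  rw [← Nat.card_sigma]
  refine Nat.card_congr <| Equiv.ofBijective (fun x ↦ ⟨x.2.1, x.2.2.2⟩) ⟨?_, fun x ↦ ?_⟩
  · rintro ⟨i, x, hix, hx⟩ ⟨j, y, hjy, hy⟩ h
    obtain rfl : x = y := congrArg Subtype.val h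
    obtain rfl : i = j := (hR x).unique hix hjy
    rfl
  · obtain ⟨i, hi⟩ := (hR x).exists
    exact ⟨⟨i, x, hi, x.2⟩, rfl⟩

theorem sum_perm_fin_two {M : Type*} [AddCommMonoid M] {α β : Perm (Fin 2)} (hne : α ≠ β)
    (f : Perm (Fin 2) → M) : ∑ γ, f γ = f α + f β := by
  have univ_eq : Finset.univ = {α, β} := by
    revert α β
    decide
  rw [univ_eq, Finset.sum_pair hne]

section Occurrences

variable {k n : ℕ}

/-- The occurrences of the pattern `α` in `π`, each encoded as the increasing map listing its
positions. -/
def occurrences (α : Perm (Fin k)) (π : Perm (Fin n)) : Set (Fin k → Fin n) :=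
  {f | StrictMono f ∧ ∀ a b, α a < α b ↔ π (f a) < π (f b)}

/-- The occurrences of `α` in the suffix of `π` that starts at position `p`. Here `p` is a natural
number so that the suffix may be empty. -/
def occurrencesFrom (p : ℕ) (α : Perm (Fin k)) (π : Perm (Fin n)) : Set (Fin k → Fin n) :=
  {f ∈ occurrences α π | ∀ a, p ≤ f a}

theorem occCount_eq_ncard_occurrences (α : Perm (Fin k)) (π : Perm (Fin n)) :
    occCount α π = (occurrences α π).ncard :=
  rfl

theorem occCount_eq_zero_of_lt (h : n < k) (α : Perm (Fin k)) (π : Perm (Fin n)) :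
    occCount α π = 0 := by
  have occurrences_eq_empty : occurrences α π = ∅ :=
    Set.eq_empty_of_forall_notMem fun f hf ↦ by
      simpa [h.not_ge] using Fintype.card_le_of_injective f hf.1.injective
  rw [occCount_eq_ncard_occurrences, occurrences_eq_empty, Set.ncard_empty]

theorem apply_eq_zero_of_mem_occurrences [NeZero k] [NeZero n] {α : Perm (Fin k)}
    {π : Perm (Fin n)} {f : Fin k → Fin n} (hf : f ∈ occurrences α π) {a : Fin k}
    (ha : π (f a) = 0) : α a = 0 := by
  by_contra h
  have lt_apply := (hf.2 (α.symm 0) a).1 (by simpa using Fin.pos_iff_ne_zero.2 h)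
  simp [ha] at lt_apply

theorem existsUnique_mem_occurrences (π : Perm (Fin n)) {f : Fin k → Fin n} (hf : StrictMono f) :
    ∃! α : Perm (Fin k), f ∈ occurrences α π := by
  simpa [occurrences, hf] using existsUnique_perm_lt_iff_lt (π.injective.comp hf.injective)

theorem sum_ncard_occurrencesFrom (p : ℕ) (π : Perm (Fin n)) :
    ∑ α : Perm (Fin k), (occurrencesFrom p α π).ncard = (n - p).choose k := by
  have pairwise_disjoint :
      Pairwise (Function.onFun Disjoint fun α : Perm (Fin k) ↦ occurrencesFrom p α π) :=
    fun α β hne ↦ Set.disjoint_left.2 fun f hα hβ ↦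
      hne ((existsUnique_mem_occurrences π hα.1.1).unique hα.1 hβ.1)
  have iUnion_eq : ⋃ α : Perm (Fin k), occurrencesFrom p α π =
      {f | StrictMono f ∧ ∀ a, f a ∈ ({x | p ≤ x} : Finset (Fin n))} := by
    ext f
    simp only [Set.mem_iUnion, Finset.mem_filter_univ]
    constructor
    · rintro ⟨α, hf, hp⟩
      exact ⟨hf.1, hp⟩
    · rintro ⟨hf, hp⟩
      obtain ⟨α, hα⟩ := (existsUnique_mem_occurrences π hf).exists
      exact ⟨α, hα, hp⟩
  have card_suffix : ({x | p ≤ x} : Finset (Fin n)).card = n - p := by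
    have card_add_card :=
      Finset.card_filter_add_card_filter_not (s := Finset.univ) fun x : Fin n ↦ (x : ℕ) < p
    simp only [Fin.card_filter_val_lt, not_lt, Finset.card_univ, Fintype.card_fin] at card_add_card
    lia
  rw [← finsum_eq_sum_of_fintype,
    ← Set.ncard_iUnion_of_finite (fun _ ↦ Set.toFinite _) pairwise_disjoint, iUnion_eq,
    ncard_strictMono_mem, card_suffix]

end Occurrences

section Symmetry

variable {k n : ℕ}

theorem occCount_trans_revPerm (α : Perm (Fin k)) (π : Perm (Fin n)) :
    occCount (α.trans Fin.revPerm) (π.trans Fin.revPerm) = occCount α π := by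
  refine Nat.card_congr <| Equiv.subtypeEquivRight fun f ↦ and_congr_right fun _ ↦ ?_
  simp only [Equiv.trans_apply, Fin.revPerm_apply, Fin.rev_lt_rev]
  exact forall_comm

theorem occCount_revPerm_trans (α : Perm (Fin k)) (π : Perm (Fin n)) :
    occCount (Fin.revPerm.trans α) (Fin.revPerm.trans π) = occCount α π := by
  refine Nat.card_congr <| (Equiv.arrowCongr Fin.revPerm Fin.revPerm).subtypeEquiv fun f ↦
    and_congr ?_ ?_
  · refine ⟨fun hf a b h ↦ Fin.rev_lt_rev.2 <| hf <| Fin.rev_lt_rev.2 h, fun hf a b h ↦ ?_⟩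
    simpa using hf (Fin.rev_lt_rev.2 h)
  · rw [Fin.rev_surjective.forall₂]
    simp

theorem sContainBoth_trans_revPerm (α β : Perm (Fin 3)) (n : ℕ) :
    sContainBoth (α.trans Fin.revPerm) (β.trans Fin.revPerm) n = sContainBoth α β n := by
  refine (Nat.card_congr <| (Equiv.equivCongr (.refl _) Fin.revPerm).subtypeEquiv fun π ↦ ?_).symm
  change _ ↔ occCount _ (π.trans Fin.revPerm) = 1 ∧ occCount _ (π.trans Fin.revPerm) = 1
  rw [occCount_trans_revPerm, occCount_trans_revPerm, containsOnce, containsOnce]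

theorem sContainBoth_revPerm_trans (α β : Perm (Fin 3)) (n : ℕ) :
    sContainBoth (Fin.revPerm.trans α) (Fin.revPerm.trans β) n = sContainBoth α β n := by
  refine (Nat.card_congr <| (Equiv.equivCongr Fin.revPerm (.refl _)).subtypeEquiv fun π ↦ ?_).symm
  change _ ↔ occCount _ (Fin.revPerm.trans π) = 1 ∧ occCount _ (Fin.revPerm.trans π) = 1
  rw [occCount_revPerm_trans, occCount_revPerm_trans, containsOnce, containsOnce]

theorem sContainBoth_comm (α β : Perm (Fin 3)) (n : ℕ) :
    sContainBoth α β n = sContainBoth β α n := by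
  simp only [sContainBoth, and_comm]

end Symmetry

section InsertMin

variable {k n : ℕ}

/-- The permutation obtained from `τ` by inserting a new minimum at position `p`. In particular
`insertMin 0 α` is the direct sum `1 ⊕ α`. -/
def insertMin (p : Fin (n + 1)) (τ : Perm (Fin n)) : Perm (Fin (n + 1)) :=
  (finSuccEquiv' p).trans (τ.optionCongr.trans (finSuccEquiv' 0).symm)

@[simp]
theorem insertMin_self (p : Fin (n + 1)) (τ : Perm (Fin n)) : insertMin p τ p = 0 := by
  simp [insertMin]

@[simp]
theorem insertMin_succAbove (p : Fin (n + 1)) (τ : Perm (Fin n)) (x : Fin n) :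
    insertMin p τ (p.succAbove x) = (τ x).succ := by
  simp [insertMin]

@[simp]
theorem insertMin_zero_succ (τ : Perm (Fin n)) (x : Fin n) :
    insertMin 0 τ x.succ = (τ x).succ := by
  simpa using insertMin_succAbove 0 τ x

theorem insertMin_bijective :
    Function.Bijective fun x : Fin (n + 1) × Perm (Fin n) ↦ insertMin x.1 x.2 := by
  rw [Fintype.bijective_iff_injective_and_card]
  constructor
  · rintro ⟨p, τ⟩ ⟨q, ρ⟩ (h : insertMin p τ = insertMin q ρ)
    obtain rfl : p = q := (insertMin p τ).injective <| by rw [insertMin_self, h, insertMin_self]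
    obtain rfl : τ = ρ := Equiv.ext fun x ↦ by simpa using congr($h (p.succAbove x))
    rfl
  · simp [Fintype.card_perm, Nat.factorial_succ]

theorem card_perm_eq_sum_insertMin (P : Perm (Fin (n + 1)) → Prop) :
    Nat.card {π // P π} = ∑ p, Nat.card {τ : Perm (Fin n) // P (insertMin p τ)} := by
  rw [← Nat.card_sigma, ← Nat.card_congr
    (Equiv.subtypeProdEquivSigmaSubtype fun (p : Fin (n + 1)) (τ : Perm (Fin n)) ↦
      P (insertMin p τ))]
  exact (Nat.card_congr <|
    (Equiv.ofBijective _ insertMin_bijective).subtypeEquiv fun _ ↦ Iff.rfl).symm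

theorem succAbove_comp_mem_occurrences_insertMin {α : Perm (Fin k)} {τ : Perm (Fin n)}
    {p : Fin (n + 1)} {g : Fin k → Fin n} :
    p.succAbove ∘ g ∈ occurrences α (insertMin p τ) ↔ g ∈ occurrences α τ := by
  simp [occurrences, StrictMono]

theorem strictMono_cons_succAbove_comp {p : Fin (n + 1)} {g : Fin k → Fin n} :
    StrictMono (Fin.cons p (p.succAbove ∘ g) : Fin (k + 1) → Fin (n + 1)) ↔
      StrictMono g ∧ ∀ a, (p : ℕ) ≤ g a := by
  have le_castSucc_iff (x : Fin n) : p ≤ x.castSucc ↔ (p : ℕ) ≤ x := Iff.rfl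
  simp [StrictMono, Fin.forall_fin_succ, Fin.lt_succAbove_iff_le_castSucc, le_castSucc_iff,
    and_comm]

theorem cons_comp_mem_occurrences_insertMin {α : Perm (Fin k)} {τ : Perm (Fin n)}
    {p : Fin (n + 1)} {g : Fin k → Fin n} :
    (Fin.cons p (p.succAbove ∘ g) : Fin (k + 1) → Fin (n + 1)) ∈
        occurrences (insertMin 0 α) (insertMin p τ) ↔ g ∈ occurrencesFrom p α τ := by
  have lt_iff_lt : (∀ a b, insertMin 0 α a < insertMin 0 α b ↔
      insertMin p τ (Fin.cons (α := fun _ ↦ Fin (n + 1)) p (p.succAbove ∘ g) a) <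
        insertMin p τ (Fin.cons (α := fun _ ↦ Fin (n + 1)) p (p.succAbove ∘ g) b)) ↔
      ∀ a b, α a < α b ↔ τ (g a) < τ (g b) := by
    simp [Fin.forall_fin_succ]
  exact (and_congr strictMono_cons_succAbove_comp lt_iff_lt).trans and_right_comm

theorem exists_eq_succAbove_comp {ι : Type*} {p : Fin (n + 1)} {f : ι → Fin (n + 1)}
    (h : ∀ a, f a ≠ p) : ∃ g, f = p.succAbove ∘ g := by
  choose g hg using fun a ↦ Fin.exists_succAbove_eq (h a)
  exact ⟨g, funext fun a ↦ (hg a).symm⟩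

theorem occurrences_insertMin_zero (α : Perm (Fin k)) (p : Fin (n + 1)) (τ : Perm (Fin n)) :
    occurrences (insertMin 0 α) (insertMin p τ) =
      (p.succAbove ∘ ·) '' occurrences (insertMin 0 α) τ ∪
        (fun g ↦ Fin.cons p (p.succAbove ∘ g)) '' occurrencesFrom p α τ := by
  ext f
  constructor
  · intro hf
    have eq_zero {a} (ha : f a = p) : a = 0 := (insertMin 0 α).injective <| by
      rw [apply_eq_zero_of_mem_occurrences hf (by rw [ha, insertMin_self]), insertMin_self]
    by_cases h0 : f 0 = p
    · obtain ⟨g, hg⟩ := exists_eq_succAbove_comp (p := p) (f := Fin.tail f) fun a ha ↦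
        Fin.succ_ne_zero a (eq_zero ha)
      obtain rfl : f = Fin.cons p (p.succAbove ∘ g) := by rw [← hg, ← h0, Fin.cons_self_tail]
      exact .inr ⟨g, cons_comp_mem_occurrences_insertMin.1 hf, rfl⟩
    · obtain ⟨g, rfl⟩ := exists_eq_succAbove_comp (p := p) (f := f) fun a ha ↦ h0 (eq_zero ha ▸ ha)
      exact .inl ⟨g, succAbove_comp_mem_occurrences_insertMin.1 hf, rfl⟩
  · rintro (⟨g, hg, rfl⟩ | ⟨g, hg, rfl⟩)
    exacts [succAbove_comp_mem_occurrences_insertMin.2 hg,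
      cons_comp_mem_occurrences_insertMin.2 hg]

theorem occCount_insertMin (α : Perm (Fin k)) (p : Fin (n + 1)) (τ : Perm (Fin n)) :
    occCount (insertMin 0 α) (insertMin p τ) =
      occCount (insertMin 0 α) τ + (occurrencesFrom p α τ).ncard := by
  have comp_injective (m : ℕ) : Function.Injective fun g : Fin m → Fin n ↦ p.succAbove ∘ g :=
    Fin.succAbove_right_injective.comp_left
  have cons_injective :
      Function.Injective fun g : Fin k → Fin n ↦ (Fin.cons p (p.succAbove ∘ g) : Fin (k + 1) → _) :=
    (Fin.cons_right_injective (α := fun _ ↦ Fin (n + 1)) p).comp (comp_injective k)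
  have disjoint : Disjoint ((p.succAbove ∘ ·) '' occurrences (insertMin 0 α) τ)
      ((fun g ↦ Fin.cons p (p.succAbove ∘ g)) '' occurrencesFrom p α τ) := by
    rw [Set.disjoint_left]
    rintro _ ⟨g, -, rfl⟩ ⟨g', -, h⟩
    exact Fin.ne_succAbove p (g 0) (congrFun h 0)
  simp only [occCount_eq_ncard_occurrences, occurrences_insertMin_zero]
  rw [Set.ncard_union_eq disjoint, Set.ncard_image_of_injective _ (comp_injective _),
    Set.ncard_image_of_injective _ cons_injective]

theorem sum_occCount_insertMin (p : Fin (n + 1)) (τ : Perm (Fin n)) :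
    ∑ α : Perm (Fin k), occCount (insertMin 0 α) (insertMin p τ) =
      ∑ α : Perm (Fin k), occCount (insertMin 0 α) τ + (n - p).choose k := by
  simp only [occCount_insertMin, Finset.sum_add_distrib, sum_ncard_occurrencesFrom]

theorem occCount_insertMin_of_lt (α : Perm (Fin k)) {p : Fin (n + 1)} (hp : n < p + k)
    (τ : Perm (Fin n)) :
    occCount (insertMin 0 α) (insertMin p τ) = occCount (insertMin 0 α) τ := by
  have sum_eq_zero := sum_ncard_occurrencesFrom (k := k) p τ
  rw [Nat.choose_eq_zero_of_lt (by lia), Finset.sum_eq_zero_iff] at sum_eq_zero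
  rw [occCount_insertMin, sum_eq_zero α (Finset.mem_univ α), add_zero]

end InsertMin

section EndsWith

variable {k n : ℕ}

/-- The last `k` entries of `τ` are order-isomorphic to `α`. Only meaningful for `k ≤ n`. -/
def EndsWith (α : Perm (Fin k)) (τ : Perm (Fin n)) : Prop :=
  (occurrencesFrom (n - k) α τ).Nonempty

theorem exists_ncard_occurrencesFrom_sub_eq_single (hkn : k ≤ n) (τ : Perm (Fin n)) :
    ∃ α : Perm (Fin k), ∀ β, (occurrencesFrom (n - k) β τ).ncard =
      (Pi.single α 1 : Perm (Fin k) → ℕ) β := by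
  have sum_eq_one := sum_ncard_occurrencesFrom (k := k) (n - k) τ
  rw [Nat.sub_sub_self hkn, Nat.choose_self] at sum_eq_one
  obtain ⟨α, hα⟩ := (Finsupp.sum_eq_one_iff (Finsupp.equivFunOnFinite.symm
    fun β : Perm (Fin k) ↦ (occurrencesFrom (n - k) β τ).ncard)).1
      (by rwa [Finsupp.sum_fintype _ _ fun _ ↦ rfl])
  exact ⟨α, fun β ↦ (DFunLike.congr_fun hα β).trans (congrFun (Finsupp.single_eq_pi_single α 1) β)⟩

theorem endsWith_iff_ncard_ne_zero {α : Perm (Fin k)} {τ : Perm (Fin n)} :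
    EndsWith α τ ↔ (occurrencesFrom (n - k) α τ).ncard ≠ 0 :=
  (Set.ncard_pos (Set.toFinite _)).symm.trans Nat.pos_iff_ne_zero

theorem existsUnique_endsWith (hkn : k ≤ n) (τ : Perm (Fin n)) :
    ∃! α : Perm (Fin k), EndsWith α τ := by
  obtain ⟨α, hα⟩ := exists_ncard_occurrencesFrom_sub_eq_single hkn τ
  exact ⟨α, by simp [endsWith_iff_ncard_ne_zero, hα],
    fun β hβ ↦ by simpa [endsWith_iff_ncard_ne_zero, hα, Pi.single_apply] using hβ⟩

open scoped Classical in
theorem ncard_occurrencesFrom_sub (hkn : k ≤ n) (α : Perm (Fin k)) (τ : Perm (Fin n)) :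
    (occurrencesFrom (n - k) α τ).ncard = if EndsWith α τ then 1 else 0 := by
  obtain ⟨β, hβ⟩ := exists_ncard_occurrencesFrom_sub_eq_single hkn τ
  simp [endsWith_iff_ncard_ne_zero, hβ, Pi.single_apply]

open scoped Classical in
theorem occCount_insertMin_of_add_eq (α : Perm (Fin k)) {p : Fin (n + 1)} (hp : p + k = n)
    (τ : Perm (Fin n)) :
    occCount (insertMin 0 α) (insertMin p τ) =
      occCount (insertMin 0 α) τ + if EndsWith α τ then 1 else 0 := by
  rw [occCount_insertMin, ← ncard_occurrencesFrom_sub (by lia), ← Nat.eq_sub_of_add_eq hp]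

theorem endsWith_iff_eq {α τ : Perm (Fin n)} : EndsWith α τ ↔ α = τ := by
  have endsWith_self : EndsWith τ τ :=
    ⟨id, ⟨strictMono_id, fun _ _ ↦ Iff.rfl⟩, fun a ↦ by simp⟩
  refine ⟨fun h ↦ (existsUnique_endsWith le_rfl τ).unique h endsWith_self, ?_⟩
  rintro rfl
  exact endsWith_self

theorem endsWith_insertMin (α : Perm (Fin k)) (τ : Perm (Fin n)) {p : Fin (n + 1)}
    (hp : p + k ≤ n) : EndsWith α (insertMin p τ) ↔ EndsWith α τ := by
  have le_succAbove_iff (x : Fin n) : n + 1 - k ≤ p.succAbove x ↔ n - k ≤ x := by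
    grind [Fin.succAbove]
  constructor
  · rintro ⟨f, hf, hfrom⟩
    obtain ⟨g, rfl⟩ := exists_eq_succAbove_comp (p := p) (f := f) fun a ha ↦ by
      have le_apply := hfrom a
      lia
    exact ⟨g, succAbove_comp_mem_occurrences_insertMin.1 hf,
      fun a ↦ (le_succAbove_iff _).1 (hfrom a)⟩
  · rintro ⟨g, hg, hfrom⟩
    exact ⟨_, succAbove_comp_mem_occurrences_insertMin.2 hg,
      fun a ↦ (le_succAbove_iff _).2 (hfrom a)⟩

theorem endsWith_insertMin_natAdd (α : Perm (Fin 2)) (τ : Perm (Fin (n + 1))) (i : Fin 2) :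
    EndsWith α (insertMin (n := n + 1) (Fin.natAdd n i) τ) ↔ α i = 0 := by
  set π := insertMin (n := n + 1) (Fin.natAdd n i) τ with π_def
  have apply_eq_zero {γ : Perm (Fin 2)} (h : EndsWith γ π) : γ i = 0 := by
    obtain ⟨f, hf, hfrom⟩ := h
    have apply_eq : f i = Fin.natAdd n i := by
      have f_lt : f 0 < f 1 := hf.1 (by decide)
      have le_f := hfrom 0
      fin_cases i <;> simp only [Fin.ext_iff, Fin.val_natAdd] <;> lia
    exact apply_eq_zero_of_mem_occurrences hf (by rw [apply_eq, π_def, insertMin_self])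
  refine ⟨apply_eq_zero, fun h ↦ ?_⟩
  obtain ⟨γ, hγ⟩ := (existsUnique_endsWith (Nat.le_add_left 2 n) π).exists
  have perm_eq : ∀ (i : Fin 2) (α γ : Perm (Fin 2)), α i = 0 → γ i = 0 → α = γ := by decide
  exact perm_eq i α γ h (apply_eq_zero hγ) ▸ hγ

end EndsWith

section EndCount

/-- `τ` ends with the pattern `α` and contains the patterns `1 ⊕ α` and `1 ⊕ β` exactly `a` and
`b` times. -/
def EndsWithCounts {k n : ℕ} (α β : Perm (Fin k)) (a b : ℕ) (τ : Perm (Fin n)) : Prop :=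
  EndsWith α τ ∧ occCount (insertMin 0 α) τ = a ∧ occCount (insertMin 0 β) τ = b

/-- The number of permutations of length `n` that satisfy `EndsWithCounts`. -/
noncomputable def endCount {k : ℕ} (n : ℕ) (α β : Perm (Fin k)) (a b : ℕ) : ℕ :=
  Nat.card {τ : Perm (Fin n) // EndsWithCounts α β a b τ}

variable {m a b : ℕ} {α β : Perm (Fin 2)}

theorem endCount_add_endCount (hne : α ≠ β) :
    endCount (m + 2) α β a b + endCount (m + 2) β α b a =
      Nat.card {τ : Perm (Fin (m + 2)) //
        occCount (insertMin 0 α) τ = a ∧ occCount (insertMin 0 β) τ = b} := by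
  rw [← sum_card_and_of_existsUnique (existsUnique_endsWith (Nat.le_add_left 2 m)),
    sum_perm_fin_two hne]
  simp only [endCount, EndsWithCounts, and_comm (a := _ = b)]

theorem endsWithCounts_insertMin_natAdd (τ : Perm (Fin (m + 1))) (i : Fin 2) :
    EndsWithCounts α β a b (insertMin (n := m + 1) (Fin.natAdd m i) τ) ↔
      α i = 0 ∧ occCount (insertMin 0 α) τ = a ∧ occCount (insertMin 0 β) τ = b := by
  have lt_add : m + 1 < (Fin.natAdd m i : ℕ) + 2 := by
    rw [Fin.val_natAdd]
    lia
  rw [EndsWithCounts, endsWith_insertMin_natAdd,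
    occCount_insertMin_of_lt (n := m + 1) (p := Fin.natAdd m i) _ lt_add,
    occCount_insertMin_of_lt (n := m + 1) (p := Fin.natAdd m i) _ lt_add]

theorem endsWithCounts_insertMin_of_add_eq {k n : ℕ} {α β : Perm (Fin k)} (hne : α ≠ β)
    {p : Fin (n + 1)} (hp : p + k = n) (τ : Perm (Fin n)) :
    EndsWithCounts α β a b (insertMin p τ) ↔ a ≠ 0 ∧ EndsWithCounts α β (a - 1) b τ := by
  rw [EndsWithCounts, EndsWithCounts, endsWith_insertMin α τ hp.le,
    occCount_insertMin_of_add_eq α hp, occCount_insertMin_of_add_eq β hp]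
  by_cases hα : EndsWith α τ
  · have not_endsWith : ¬EndsWith β τ :=
      fun hβ ↦ hne ((existsUnique_endsWith (by lia) τ).unique hα hβ)
    simp only [hα, not_endsWith, if_true, if_false, true_and, add_zero]
    lia
  · simp [hα]

theorem not_endsWithCounts_insertMin (hne : α ≠ β) (hab : a + b ≤ 2) {n : ℕ} {p : Fin (n + 1)}
    (hp : p + 2 < n) (τ : Perm (Fin n)) : ¬EndsWithCounts α β a b (insertMin p τ) := by
  rintro ⟨-, hα, hβ⟩
  have sum_eq := sum_occCount_insertMin (k := 2) p τ
  rw [sum_perm_fin_two hne, hα, hβ] at sum_eq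
  have three_le : 3 ≤ (n - p).choose 2 := Nat.choose_le_choose (a := 3) 2 (by lia)
  lia

theorem endCount_succ (hne : α ≠ β) (hab : a + b ≤ 2) :
    endCount (m + 3) α β a b =
      (if a = 0 then 0 else endCount (m + 2) α β (a - 1) b) +
        (endCount (m + 2) α β a b + endCount (m + 2) β α b a) := by
  have existsUnique_apply_eq_zero : ∃! i, α i = 0 :=
    ⟨α.symm 0, by simp, fun i hi ↦ by simp [← hi]⟩
  have sum_natAdd : ∑ i : Fin 2, Nat.card {τ : Perm (Fin (m + 2)) //
      EndsWithCounts α β a b (insertMin (n := m + 2) (Fin.natAdd (m + 1) i) τ)} =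
        endCount (m + 2) α β a b + endCount (m + 2) β α b a := by
    simp only [endsWithCounts_insertMin_natAdd]
    rw [endCount_add_endCount hne,
      sum_card_and_of_existsUnique fun _ ↦ existsUnique_apply_eq_zero]
  have card_castAdd_last : Nat.card {τ : Perm (Fin (m + 2)) //
      EndsWithCounts α β a b (insertMin (Fin.castAdd 2 (Fin.last m)) τ)} =
        if a = 0 then 0 else endCount (m + 2) α β (a - 1) b := by
    simp only [endsWithCounts_insertMin_of_add_eq hne (p := Fin.castAdd 2 (Fin.last m)) rfl]
    split_ifs with ha <;> simp [ha, endCount]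
  have card_castAdd_castSucc (p : Fin m) : Nat.card {τ : Perm (Fin (m + 2)) //
      EndsWithCounts α β a b (insertMin (Fin.castAdd 2 p.castSucc) τ)} = 0 := by
    have hp : (Fin.castAdd 2 p.castSucc : ℕ) + 2 < m + 2 := by simp
    simp [not_endsWithCounts_insertMin hne hab hp]
  rw [endCount, card_perm_eq_sum_insertMin, Fin.sum_univ_add (a := m + 1) (b := 2), sum_natAdd,
    Fin.sum_univ_castSucc, card_castAdd_last,
    Finset.sum_eq_zero fun p _ ↦ card_castAdd_castSucc p, zero_add]

theorem endCount_zero_left (hne : α ≠ β) (hb : b ≤ 2) :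
    endCount (m + 3) α β 0 b = endCount (m + 2) α β 0 b + endCount (m + 2) β α b 0 := by
  rw [endCount_succ hne (by lia), if_pos rfl, zero_add]

theorem endCount_one_left (hne : α ≠ β) (hb : b ≤ 1) :
    endCount (m + 3) α β 1 b =
      endCount (m + 2) α β 0 b + (endCount (m + 2) α β 1 b + endCount (m + 2) β α b 1) := by
  rw [endCount_succ hne (by lia), if_neg one_ne_zero]

theorem endCount_two : endCount 2 α β a b = if a = 0 ∧ b = 0 then 1 else 0 := by
  simp only [endCount, EndsWithCounts, endsWith_iff_eq,
    occCount_eq_zero_of_lt (Nat.lt_succ_self 2), eq_comm (a := 0)]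
  split_ifs with h <;> simp [h]

theorem endCount_zero_zero (hne : α ≠ β) (m : ℕ) : endCount (m + 2) α β 0 0 = 2 ^ m := by
  induction m generalizing α β with
  | zero => simp [endCount_two]
  | succ m ih => rw [endCount_zero_left hne (by simp), ih hne, ih hne.symm, pow_succ, mul_two]

theorem two_mul_endCount (hne : α ≠ β) (m : ℕ) :
    2 * endCount (m + 3) α β 1 0 = (m + 2) * 2 ^ m ∧ 2 * endCount (m + 3) α β 0 1 = m * 2 ^ m := by
  induction m generalizing α β with
  | zero => simp [endCount_zero_left hne, endCount_one_left hne, endCount_two]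
  | succ m ih =>
    obtain ⟨one_zero, zero_one⟩ := ih hne
    obtain ⟨one_zero_symm, zero_one_symm⟩ := ih hne.symm
    rw [endCount_zero_left hne one_le_two, endCount_one_left hne zero_le_one,
      endCount_zero_zero hne, pow_succ]
    constructor <;> linarith

theorem four_mul_endCount_one_one (hne : α ≠ β) (m : ℕ) :
    4 * endCount (m + 3) α β 1 1 = m.choose 2 * 2 ^ m := by
  induction m generalizing α β with
  | zero => simp [endCount_one_left hne, endCount_two]
  | succ m ih =>
    have zero_one := (two_mul_endCount hne m).2
    rw [endCount_one_left hne le_rfl, Nat.choose_succ_succ' m 1, Nat.choose_one_right, pow_succ]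
    linarith [ih hne, ih hne.symm]

theorem two_mul_sContainBoth_insertMin (hne : α ≠ β) (m : ℕ) :
    2 * sContainBoth (insertMin 0 α) (insertMin 0 β) (m + 3) = m.choose 2 * 2 ^ m := by
  have sContainBoth_eq : sContainBoth (insertMin 0 α) (insertMin 0 β) (m + 3) =
      endCount (m + 3) α β 1 1 + endCount (m + 3) β α 1 1 :=
    (endCount_add_endCount hne).symm
  linarith [four_mul_endCount_one_one hne m, four_mul_endCount_one_one hne.symm m]

end EndCount

theorem sContainBoth_p123_p132 {n : ℕ} (hn : 5 ≤ n) :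
    sContainBoth p123 p132 n = (n - 3) * (n - 4) * 2 ^ (n - 5) := by
  obtain ⟨m, rfl⟩ := Nat.exists_eq_add_of_le' hn
  have p123_eq : p123 = insertMin 0 (1 : Perm (Fin 2)) := by decide
  have p132_eq : p132 = insertMin 0 (swap 0 1 : Perm (Fin 2)) := by decide
  have one_ne_swap : (1 : Perm (Fin 2)) ≠ swap 0 1 := by decide
  have two_mul_choose : 2 * (m + 2).choose 2 = (m + 2) * (m + 1) := by
    rw [Nat.choose_two_right, Nat.mul_div_cancel' (Nat.even_mul_pred_self _).two_dvd]
    rfl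
  refine Nat.eq_of_mul_eq_mul_left two_pos ?_
  calc 2 * sContainBoth p123 p132 (m + 5)
      = (m + 2).choose 2 * 2 ^ (m + 2) := by
        rw [p123_eq, p132_eq, two_mul_sContainBoth_insertMin one_ne_swap (m + 2)]
    _ = 2 * (2 * (m + 2).choose 2 * 2 ^ m) := by ring
    _ = 2 * ((m + 2) * (m + 1) * 2 ^ m) := by rw [two_mul_choose]

/-- Theorem 5.1: for each listed pair `{α,β}`, `s_n(∅;{α,β}) = (n−3)(n−4)·2^{n−5}`
for `n ≥ 5`. -/
theorem sContainBoth_eq_of_mem_classH :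
    ∀ p ∈ [(p123, p132), (p123, p213), (p231, p321), (p312, p321)],
      ∀ n : ℕ, 5 ≤ n → sContainBoth p.1 p.2 n = (n - 3) * (n - 4) * 2 ^ (n - 5) := by
  intro p hp n hn
  have p321_eq_reverse : p321 = Fin.revPerm.trans p123 := by decide
  have p231_eq_reverse : p231 = Fin.revPerm.trans p132 := by decide
  have p321_eq_complement : p321 = p123.trans Fin.revPerm := by decide
  have p312_eq_complement : p312 = p132.trans Fin.revPerm := by decide
  have p123_eq_complement : p123 = p321.trans Fin.revPerm := by decide
  have p213_eq_complement : p213 = p231.trans Fin.revPerm := by decide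
  have p123_p132 := sContainBoth_p123_p132 hn
  have p321_p231 : sContainBoth p321 p231 n = (n - 3) * (n - 4) * 2 ^ (n - 5) := by
    rw [p321_eq_reverse, p231_eq_reverse, sContainBoth_revPerm_trans, p123_p132]
  simp only [List.mem_cons, List.not_mem_nil, or_false] at hp
  rcases hp with rfl | rfl | rfl | rfl
  · exact p123_p132
  · rw [p123_eq_complement, p213_eq_complement, sContainBoth_trans_revPerm, p321_p231]
  · rw [sContainBoth_comm, p321_p231]
  · rw [sContainBoth_comm, p321_eq_complement, p312_eq_complement, sContainBoth_trans_revPerm,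
      p123_p132]
end
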